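/- Fix a unit vector 𝐧 ∈ ℝⁿ and set P₀(z) = I − 2s(z)𝐧𝐧ᵀ. For i = 1, 2, 3, let Q_i(z) = λ_i s′(z)𝐧𝐧ᵀ + s(z)E₂^{(i)} + (1 − s(z))E₃^{(i)} + E₄^{(i)}, where λ_i ∈ ℝ and E₂^{(i)} ∈ V₂, E₃^{(i)} ∈ V₃, E₄^{(i)} ∈ V₄ are constant matrices. Then lim_{R→+∞} ∫_{−R}^{R} T_f(P₀(z), Q₁(z), Q₂(z)) : Q₃(z) dz = 0. -/

import Mathlib

/-!
The integrand is computed in block form along `v ⊕ v^⊥`. With `s = sAC z` and `c = 1 - 2 s`,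
`P₀ = diag(c, 1)` and `Qᵢ` has the blocks `aᵢ = λᵢ s'`, `pᵢ = s lᵢ + (1 - s) mᵢ` (row),
`qᵢ = s lᵢ - (1 - s) mᵢ` (column) and `Wᵢ` (antisymmetric). The symmetric matrices
`P₀ Q₁ᵀ + Q₁ P₀` and `P₀ Q₁ + Q₁ᵀ P₀` have vanishing `v^⊥` block, so the contraction of `T_f` is an
explicit scalar expression in these blocks (`finner_Tf_blk`); the two cubic terms in the `Wᵢ` cancel
by antisymmetry.

Since `s' = √2 s (1 - s)`, this expression is `s'` times a polynomial in `s`, and it has the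
primitive `G(s) / √2` (`primAC`), where `G` is a polynomial with `G(0) = G(1) = 0`. As `s → 0` at `-∞`
and `s → 1` at `+∞`, the integral over `[-R, R]` tends to `(G(1) - G(0)) / √2 = 0`.
-/

open Matrix Filter

noncomputable section

/-- The standard one-dimensional Allen–Cahn transition profile. -/
def sAC (z : ℝ) : ℝ := 1 - (1 + Real.exp (Real.sqrt 2 * z))⁻¹

/-- Frobenius inner product of matrices. -/
def finner {n : ℕ} (A B : Matrix (Fin n) (Fin n) ℝ) : ℝ := ∑ i, ∑ j, A i j * B i j

/-- The trilinear form `T_f(A₁,A₂,A₃)`. -/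
def Tf {n : ℕ} (A1 A2 A3 : Matrix (Fin n) (Fin n) ℝ) : Matrix (Fin n) (Fin n) ℝ :=
  (A1 * A2ᵀ + A2 * A1ᵀ) * A3 + A3 * (A1ᵀ * A2 + A2ᵀ * A1) + (A1 * A3ᵀ * A2 + A2 * A3ᵀ * A1)

/-! ### Block calculus along a unit vector -/

/-- The matrix with blocks `a` (the `v v` entry), `p` (row), `q` (column) and `W` with respect to
`ℝ v ⊕ v^⊥`. Orthogonality of `p`, `q`, `W` to `v` is not built in, but assumed where needed. -/
def blk {n : ℕ} (v : Fin n → ℝ) (a : ℝ) (p q : Fin n → ℝ) (W : Matrix (Fin n) (Fin n) ℝ) :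
    Matrix (Fin n) (Fin n) ℝ :=
  a • vecMulVec v v + vecMulVec v p + vecMulVec q v + W

/-- The data `p`, `q`, `W` of a block matrix live on `v^⊥`. -/
structure Perp {n : ℕ} (v p q : Fin n → ℝ) (W : Matrix (Fin n) (Fin n) ℝ) : Prop where
  p_v : p ⬝ᵥ v = 0
  q_v : q ⬝ᵥ v = 0
  mulVec_v : W *ᵥ v = 0
  v_vecMul : v ᵥ* W = 0

section
variable {n : ℕ} {v : Fin n → ℝ}

lemma blk_transpose (a : ℝ) (p q : Fin n → ℝ) (W : Matrix (Fin n) (Fin n) ℝ) :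
    (blk v a p q W)ᵀ = blk v a q p Wᵀ := by
  simp only [blk, transpose_add, transpose_smul, transpose_vecMulVec]
  abel

lemma blk_add (a a' : ℝ) (p q p' q' : Fin n → ℝ) (W W' : Matrix (Fin n) (Fin n) ℝ) :
    blk v a p q W + blk v a' p' q' W' = blk v (a + a') (p + p') (q + q') (W + W') := by
  simp only [blk, add_smul, vecMulVec_add, add_vecMulVec]
  abel

lemma Perp.transpose {p q : Fin n → ℝ} {W : Matrix (Fin n) (Fin n) ℝ} (h : Perp v p q W) :
    Perp v q p Wᵀ :=
  ⟨h.q_v, h.p_v, by rw [mulVec_transpose, h.v_vecMul], by rw [vecMul_transpose, h.mulVec_v]⟩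

/-- Block multiplication, valid because `v` is a unit vector. -/
lemma blk_mul (hv : v ⬝ᵥ v = 1) {a a' : ℝ} {p q p' q' : Fin n → ℝ}
    {W W' : Matrix (Fin n) (Fin n) ℝ} (h : Perp v p q W) (h' : Perp v p' q' W') :
    blk v a p q W * blk v a' p' q' W' =
      blk v (a * a' + p ⬝ᵥ q') (a • p' + p ᵥ* W') (a' • q + W *ᵥ q')
        (vecMulVec q p' + W * W') := by
  have hq' : v ⬝ᵥ q' = 0 := by rw [dotProduct_comm, h'.q_v]
  simp only [blk, add_mul, mul_add, Matrix.smul_mul, Matrix.mul_smul,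
    vecMulVec_mulVec, op_smul_eq_smul, smul_mulVec, mul_vecMulVec, vecMulVec_mul, h.p_v,
    h.mulVec_v, h'.v_vecMul, hv, hq', vecMulVec_add,
    add_vecMulVec, vecMulVec_smul, smul_vecMulVec, add_smul, zero_smul, one_smul,
    vecMulVec_zero, zero_vecMulVec, smul_zero]
  module

lemma Perp.mul {p q p' q' : Fin n → ℝ}
    {W W' : Matrix (Fin n) (Fin n) ℝ} (h : Perp v p q W) (h' : Perp v p' q' W') (a a' : ℝ) :
    Perp v (a • p' + p ᵥ* W') (a' • q + W *ᵥ q') (vecMulVec q p' + W * W') := by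
  have hq : v ⬝ᵥ q = 0 := by rw [dotProduct_comm, h.q_v]
  constructor
  · rw [add_dotProduct, smul_dotProduct, h'.p_v, ← dotProduct_mulVec, h'.mulVec_v]; simp
  · rw [add_dotProduct, smul_dotProduct, h.q_v, dotProduct_comm, dotProduct_mulVec, h.v_vecMul]
    simp
  · rw [add_mulVec, ← mulVec_mulVec, h'.mulVec_v, vecMulVec_mulVec, h'.p_v]; simp
  · rw [vecMul_add, ← vecMul_vecMul, h.v_vecMul, vecMul_vecMulVec, hq]; simp

lemma trace_blk_mul (hv : v ⬝ᵥ v = 1) {a a' : ℝ} {p q p' q' : Fin n → ℝ}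
    {W W' : Matrix (Fin n) (Fin n) ℝ} (h : Perp v p q W) (h' : Perp v p' q' W') :
    trace (blk v a p q W * blk v a' p' q' W') =
      a * a' + p ⬝ᵥ q' + q ⬝ᵥ p' + trace (W * W') := by
  have h'' := h.mul h' a a'
  rw [blk_mul hv h h']
  simp only [blk, trace_add, trace_smul, trace_vecMulVec, hv, h''.q_v,
    dotProduct_comm v (a • p' + p ᵥ* W'), h''.p_v]
  simp
  ring

lemma finner_eq_trace (A B : Matrix (Fin n) (Fin n) ℝ) : finner A B = trace (A * Bᵀ) := by
  simp [finner, trace, mul_apply]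

lemma perp_one_sub (hv : v ⬝ᵥ v = 1) : Perp v 0 0 (1 - vecMulVec v v) := by
  refine ⟨by simp, by simp, ?_, ?_⟩
  · rw [sub_mulVec, vecMulVec_mulVec, hv]; simp
  · rw [vecMul_sub, vecMul_vecMulVec, hv]; simp

lemma one_sub_eq_blk (t : ℝ) :
    1 - t • vecMulVec v v = blk v (1 - t) 0 0 (1 - vecMulVec v v) := by
  simp only [blk, vecMulVec_zero, zero_vecMulVec]
  module

lemma dot_mulVec_antisymm {W : Matrix (Fin n) (Fin n) ℝ} (hW : Wᵀ = -W) (x y : Fin n → ℝ) :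
    x ⬝ᵥ W *ᵥ y = -(y ⬝ᵥ W *ᵥ x) := by
  rw [dotProduct_mulVec, ← mulVec_transpose, hW, neg_mulVec, neg_dotProduct, dotProduct_comm]

/-- The two cubic terms in the antisymmetric blocks cancel: transposing reverses the order of the
factors and produces the sign `(-1)³`. -/
lemma trace_antisymm {W1 W2 W3 : Matrix (Fin n) (Fin n) ℝ} (h1 : W1ᵀ = -W1) (h2 : W2ᵀ = -W2)
    (h3 : W3ᵀ = -W3) : trace (W2 * W1 * W3) = -trace (W1 * W2 * W3) := by
  rw [← trace_transpose, transpose_mul, transpose_mul, h1, h2, h3, trace_mul_comm]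
  simp

/-- Contraction of the trilinear form in block coordinates. -/
lemma finner_Tf_blk (hv : v ⬝ᵥ v = 1) {c a1 a2 a3 : ℝ} {p1 p2 p3 q1 q2 q3 : Fin n → ℝ}
    {W1 W2 W3 : Matrix (Fin n) (Fin n) ℝ} (h1 : Perp v p1 q1 W1) (h2 : Perp v p2 q2 W2)
    (h3 : Perp v p3 q3 W3) (hW1 : W1ᵀ = -W1) (hW2 : W2ᵀ = -W2) (hW3 : W3ᵀ = -W3) :
    finner (Tf (blk v c 0 0 (1 - vecMulVec v v)) (blk v a1 p1 q1 W1) (blk v a2 p2 q2 W2))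
      (blk v a3 p3 q3 W3) =
    2 * c * a1 * (a2 * a3 + p2 ⬝ᵥ p3)
      + (p1 + c • q1) ⬝ᵥ (a2 • q3 + W3 *ᵥ p2 + a3 • q2 + W2 *ᵥ p3)
    + (2 * c * a1 * (a2 * a3 + q2 ⬝ᵥ q3)
      + (c • p1 + q1) ⬝ᵥ (a3 • p2 - W2 *ᵥ q3 + a2 • p3 - W3 *ᵥ q2))
    + (c * a3 * (a1 * a2 + q1 ⬝ᵥ q2) + c * (p3 ⬝ᵥ (a2 • p1 - W1 *ᵥ q2))
      + q3 ⬝ᵥ (a1 • p2 - W2 *ᵥ q1) - p1 ⬝ᵥ W3 *ᵥ p2)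
    + (c * a3 * (a1 * a2 + p1 ⬝ᵥ p2) + p3 ⬝ᵥ (a1 • q2 + W2 *ᵥ p1)
      + c * (q3 ⬝ᵥ (a2 • q1 + W1 *ᵥ p2)) - q2 ⬝ᵥ W3 *ᵥ q1) := by
  set J := 1 - vecMulVec v v with hJ
  have hJP : Perp v 0 0 J := perp_one_sub hv
  have hJT : Jᵀ = J := by simp [hJ, transpose_vecMulVec]
  have hJl : ∀ W : Matrix (Fin n) (Fin n) ℝ, v ᵥ* W = 0 → J * W = W := fun W h => by
    rw [hJ, sub_mul, vecMulVec_mul, h]; simp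
  have hJr : ∀ W : Matrix (Fin n) (Fin n) ℝ, W *ᵥ v = 0 → W * J = W := fun W h => by
    rw [hJ, mul_sub, mul_vecMulVec, h]; simp
  have hJv : ∀ x : Fin n → ℝ, x ⬝ᵥ v = 0 → J *ᵥ x = x := fun x h => by
    rw [hJ, sub_mulVec, vecMulVec_mulVec, dotProduct_comm v, h]; simp
  have hvJ : ∀ x : Fin n → ℝ, x ⬝ᵥ v = 0 → x ᵥ* J = x := fun x h => by
    rw [← hJT, vecMul_transpose, hJv x h]
  have v1 : ∀ x : Fin n → ℝ, x ᵥ* W1 = -(W1 *ᵥ x) := fun x => by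
    rw [← mulVec_transpose, hW1, neg_mulVec]
  have v2 : ∀ x : Fin n → ℝ, x ᵥ* W2 = -(W2 *ᵥ x) := fun x => by
    rw [← mulVec_transpose, hW2, neg_mulVec]
  have v3 : ∀ x : Fin n → ℝ, x ᵥ* W3 = -(W3 *ᵥ x) := fun x => by
    rw [← mulVec_transpose, hW3, neg_mulVec]
  have t1 := h1.transpose
  have t2 := h2.transpose
  have t3 := h3.transpose
  -- The left symmetric factor `P Q₁ᵀ + Q₁ P` has no `v^⊥` block.
  have S : blk v c 0 0 J * (blk v a1 p1 q1 W1)ᵀ + blk v a1 p1 q1 W1 * (blk v c 0 0 J)ᵀ =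
      blk v (2 * c * a1) (p1 + c • q1) (p1 + c • q1) 0 := by
    rw [blk_transpose, blk_transpose, hJT, blk_mul hv hJP t1, blk_mul hv h1 hJP, blk_add,
      hJl _ t1.v_vecMul, hJr _ h1.mulVec_v, hJv _ h1.p_v, hvJ _ h1.p_v, hW1]
    congr 1
    · simp; ring
    · simp; abel
    · simp
    · simp
  -- The right symmetric factor `P Q₁ + Q₁ᵀ P` likewise.
  have S' : (blk v c 0 0 J)ᵀ * blk v a1 p1 q1 W1 + (blk v a1 p1 q1 W1)ᵀ * blk v c 0 0 J =
      blk v (2 * c * a1) (c • p1 + q1) (c • p1 + q1) 0 := by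
    rw [blk_transpose, blk_transpose, hJT, blk_mul hv hJP h1, blk_mul hv t1 hJP, blk_add,
      hJl _ h1.v_vecMul, hJr _ t1.mulVec_v, hJv _ h1.q_v, hvJ _ h1.q_v, hW1]
    congr 1
    · simp; ring
    · simp
    · simp; abel
    · simp
  have hS : Perp v (p1 + c • q1) (p1 + c • q1) 0 := by
    constructor <;> simp [add_dotProduct, h1.p_v, h1.q_v]
  have hS' : Perp v (c • p1 + q1) (c • p1 + q1) 0 := by
    constructor <;> simp [add_dotProduct, h1.p_v, h1.q_v]
  have R1 : (blk v (2 * c * a1) (p1 + c • q1) (p1 + c • q1) 0 * blk v a2 p2 q2 W2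
      * blk v a3 q3 p3 W3ᵀ).trace = 2 * c * a1 * (a2 * a3 + p2 ⬝ᵥ p3)
      + (p1 + c • q1) ⬝ᵥ (a2 • q3 + W3 *ᵥ p2 + a3 • q2 + W2 *ᵥ p3) := by
    rw [Matrix.mul_assoc, blk_mul hv h2 t3, trace_blk_mul hv hS (h2.mul t3 a2 a3),
      vecMul_transpose]
    simp only [dotProduct_add, Matrix.zero_mul, trace_zero]
    ring
  have R2 : (blk v a2 p2 q2 W2 * blk v (2 * c * a1) (c • p1 + q1) (c • p1 + q1) 0
      * blk v a3 q3 p3 W3ᵀ).trace = 2 * c * a1 * (a2 * a3 + q2 ⬝ᵥ q3)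
      + (c • p1 + q1) ⬝ᵥ (a3 • p2 - W2 *ᵥ q3 + a2 • p3 - W3 *ᵥ q2) := by
    rw [Matrix.mul_assoc, trace_mul_comm, Matrix.mul_assoc, blk_mul hv t3 h2,
      trace_blk_mul hv hS' (t3.mul h2 a3 a2), v2, hW3, neg_mulVec]
    simp only [dotProduct_add, dotProduct_sub, dotProduct_neg, Matrix.zero_mul, trace_zero,
      dotProduct_comm q3 q2]
    ring
  have R3 : (blk v c 0 0 J * (blk v a2 p2 q2 W2)ᵀ * blk v a1 p1 q1 W1
      * blk v a3 q3 p3 W3ᵀ).trace = c * a3 * (a1 * a2 + q1 ⬝ᵥ q2)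
      + c * (p3 ⬝ᵥ (a2 • p1 - W1 *ᵥ q2))
      + q3 ⬝ᵥ (a1 • p2 - W2 *ᵥ q1) - p1 ⬝ᵥ W3 *ᵥ p2 + trace (W2 * W1 * W3) := by
    rw [Matrix.mul_assoc, Matrix.mul_assoc, trace_mul_comm, ← Matrix.mul_assoc, Matrix.mul_assoc,
      blk_transpose, blk_mul hv t2 h1, blk_mul hv t3 hJP,
      trace_blk_mul hv (t2.mul h1 a2 a1) (t3.mul hJP a3 c), hvJ _ h3.q_v,
      hJr _ t3.mulVec_v, v1, hW2, hW3, neg_mulVec]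
    simp only [dotProduct_add, add_dotProduct, dotProduct_sub, neg_dotProduct, dotProduct_smul,
      smul_dotProduct, dotProduct_neg, add_mul, trace_add, vecMulVec_mul, trace_vecMulVec,
      smul_zero, zero_add, mulVec_zero, add_zero, Matrix.neg_mul, Matrix.mul_neg, trace_neg,
      dotProduct_zero, neg_mulVec, v3, neg_neg, vecMulVec_zero, smul_eq_mul,
      dotProduct_comm q2 q1, dotProduct_comm p1 p3, dotProduct_comm p2 q3,
      dotProduct_comm (W1 *ᵥ q2) p3, dotProduct_comm (W2 *ᵥ q1) q3,
      dot_mulVec_antisymm hW3 p1 p2]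
    ring
  have R4 : (blk v a1 p1 q1 W1 * (blk v a2 p2 q2 W2)ᵀ * blk v c 0 0 J
      * blk v a3 q3 p3 W3ᵀ).trace = c * a3 * (a1 * a2 + p1 ⬝ᵥ p2) + p3 ⬝ᵥ (a1 • q2 + W2 *ᵥ p1)
      + c * (q3 ⬝ᵥ (a2 • q1 + W1 *ᵥ p2)) - q2 ⬝ᵥ W3 *ᵥ q1 + trace (W1 * W2 * W3) := by
    rw [Matrix.mul_assoc, blk_transpose, blk_mul hv h1 t2, blk_mul hv hJP t3,
      trace_blk_mul hv (h1.mul t2 a1 a2) (hJP.mul t3 c a3), hJv _ h3.p_v,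
      hJl _ t3.v_vecMul, vecMul_transpose, hW2, hW3]
    simp only [dotProduct_add, add_dotProduct, dotProduct_smul,
      smul_dotProduct, dotProduct_neg, add_mul, trace_add, vecMulVec_mul, trace_vecMulVec,
      smul_zero, zero_add, mulVec_zero, add_zero, Matrix.neg_mul, Matrix.mul_neg, trace_neg,
      vecMul_neg, v3, neg_neg, zero_vecMulVec, smul_eq_mul, zero_dotProduct,
      dotProduct_comm q2 p3, dotProduct_comm q1 q3,
      dotProduct_comm (W1 *ᵥ p2) q3, dotProduct_comm (W2 *ᵥ p1) p3,
      dot_mulVec_antisymm hW3 q2 q1]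
    ring
  rw [finner_eq_trace, Tf, S, S', blk_transpose a3, add_mul, add_mul, add_mul, trace_add,
    trace_add, trace_add, R1, R2, R3, R4, trace_antisymm hW1 hW2 hW3]
  ring

end

/-! ### The profile and the primitive -/

lemma sAC_hasDerivAt (z : ℝ) :
    HasDerivAt sAC (Real.sqrt 2 * (sAC z * (1 - sAC z))) z := by
  have hpos : (1 + Real.exp (Real.sqrt 2 * z)) ≠ 0 := by positivity
  have h1 : HasDerivAt (fun z : ℝ => 1 + Real.exp (Real.sqrt 2 * z))
      (Real.exp (Real.sqrt 2 * z) * (Real.sqrt 2 * 1)) z :=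
    (((hasDerivAt_id z).const_mul (Real.sqrt 2)).exp).const_add 1
  have h2 := (h1.inv hpos).const_sub 1
  refine HasDerivAt.congr_deriv (f := sAC) h2 ?_
  simp only [sAC]
  field_simp
  ring

lemma sAC_continuous : Continuous sAC :=
  continuous_iff_continuousAt.2 fun z => (sAC_hasDerivAt z).continuousAt

lemma sAC_tendsto_atTop : Tendsto sAC atTop (nhds 1) := by
  have h : Tendsto (fun z : ℝ => 1 + Real.exp (Real.sqrt 2 * z)) atTop atTop :=
    tendsto_atTop_add_const_left _ _
      (Real.tendsto_exp_atTop.comp (tendsto_id.const_mul_atTop (by positivity)))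
  simpa [Function.comp_def, ← sAC.eq_1] using (tendsto_inv_atTop_zero.comp h).const_sub 1

lemma sAC_tendsto_atBot : Tendsto (fun R : ℝ => sAC (-R)) atTop (nhds 0) := by
  have h : Tendsto (fun R : ℝ => Real.exp (Real.sqrt 2 * (-R))) atTop (nhds 0) := by
    refine Real.tendsto_exp_atBot.comp ?_
    exact tendsto_neg_atTop_atBot.const_mul_atBot (by positivity)
  simpa [sAC] using ((h.const_add 1).inv₀ (by norm_num)).const_sub 1

/-- A polynomial `G` vanishing at `0` and `1` such that `G(s(z)) / √2` is a primitive of the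
integrand. The coefficient `L` collects the terms cubic in the `λᵢ`, `A` and `B` the terms
`λᵢ lⱼ·lₖ` and `λᵢ mⱼ·mₖ`, and `X` the terms containing an antisymmetric block. -/
def primAC (L A B X s : ℝ) : ℝ :=
  2 * L * (s * (1 - s)) ^ 3 + A * (2 * s ^ 3 - 2 * s ^ 4)
    + B * (2 * (1 - s) ^ 3 - 2 * (1 - s) ^ 4) + 2 * X * (s * (1 - s))

/-- The derivative of `primAC` in `s`. -/
def derivPrimAC (L A B X s : ℝ) : ℝ :=
  6 * L * ((1 - 2 * s) * (s * (1 - s)) ^ 2) + A * (6 * s ^ 2 - 8 * s ^ 3)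
    + B * ((1 - s) ^ 2 * (2 - 8 * s)) + 2 * X * (1 - 2 * s)

lemma primAC_hasDerivAt (L A B X s : ℝ) :
    HasDerivAt (primAC L A B X) (derivPrimAC L A B X s) s := by
  have i := hasDerivAt_id s
  have t := i.const_sub 1
  have e := (i.mul t)
  have h := ((((e.pow 3).const_mul (2 * L)).add
    ((((i.pow 3).const_mul 2).sub ((i.pow 4).const_mul 2)).const_mul A)).add
    ((((t.pow 3).const_mul 2).sub ((t.pow 4).const_mul 2)).const_mul B)).add
    (e.const_mul (2 * X))
  refine HasDerivAt.congr_deriv (f := primAC L A B X) h ?_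
  simp [derivPrimAC]
  ring

lemma tendsto_integral_primAC (L A B X : ℝ) :
    Tendsto (fun R : ℝ => ∫ z in (-R)..R, sAC z * (1 - sAC z) * derivPrimAC L A B X (sAC z))
      atTop (nhds 0) := by
  have hd : ∀ z, HasDerivAt (fun z => (Real.sqrt 2)⁻¹ * primAC L A B X (sAC z))
      (sAC z * (1 - sAC z) * derivPrimAC L A B X (sAC z)) z := fun z => by
    have h := (((primAC_hasDerivAt L A B X (sAC z)).comp z (sAC_hasDerivAt z)).const_mul
      (Real.sqrt 2)⁻¹)
    refine h.congr_deriv ?_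
    have : Real.sqrt 2 ≠ 0 := by positivity
    field_simp
  have hc : Continuous fun z => sAC z * (1 - sAC z) * derivPrimAC L A B X (sAC z) := by
    have := sAC_continuous
    unfold derivPrimAC
    fun_prop
  have hG : Continuous (primAC L A B X) := by unfold primAC; fun_prop
  simp only [fun R : ℝ => intervalIntegral.integral_eq_sub_of_hasDerivAt (a := -R) (b := R)
    (fun z _ => hd z) (hc.intervalIntegrable _ _)]
  have h1 := ((hG.tendsto 1).comp sAC_tendsto_atTop).const_mul (Real.sqrt 2)⁻¹
  have h0 := ((hG.tendsto 0).comp sAC_tendsto_atBot).const_mul (Real.sqrt 2)⁻¹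
  have e1 : primAC L A B X 1 = 0 := by simp [primAC]
  have e0 : primAC L A B X 0 = 0 := by simp [primAC]
  simpa [e1, e0, Function.comp_def] using h1.sub h0

/-! ### The cancellation -/

/-- Cubic-null cancellation: for kernel profiles
`Qᵢ(z) = λᵢ s′(z)𝐧𝐧ᵀ + s(z)E₂⁽ⁱ⁾ + (1−s(z))E₃⁽ⁱ⁾ + E₄⁽ⁱ⁾`,
`lim_{R→∞} ∫_{−R}^{R} T_f(P₀, Q₁, Q₂) : Q₃ dz = 0`. -/
theorem stmt7 (n : ℕ) (v : Fin n → ℝ) (hv : (∑ i, v i ^ 2) = 1)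
    (P₀ : ℝ → Matrix (Fin n) (Fin n) ℝ)
    (hP₀ : ∀ z, P₀ z = 1 - (2 * sAC z) • vecMulVec v v)
    (lam : Fin 3 → ℝ) (E2 E3 E4 : Fin 3 → Matrix (Fin n) (Fin n) ℝ)
    (hE2 : ∀ i, ∃ l : Fin n → ℝ, l ⬝ᵥ v = 0 ∧ E2 i = vecMulVec v l + vecMulVec l v)
    (hE3 : ∀ i, ∃ l : Fin n → ℝ, l ⬝ᵥ v = 0 ∧ E3 i = vecMulVec v l - vecMulVec l v)
    (hE4 : ∀ i, (E4 i)ᵀ = -(E4 i) ∧ (E4 i).mulVec v = 0)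
    (Q : Fin 3 → ℝ → Matrix (Fin n) (Fin n) ℝ)
    (hQ : ∀ i z, Q i z = (lam i * deriv sAC z) • vecMulVec v v
      + sAC z • E2 i + (1 - sAC z) • E3 i + E4 i) :
    Tendsto (fun R : ℝ => ∫ z in (-R)..R, finner (Tf (P₀ z) (Q 0 z) (Q 1 z)) (Q 2 z))
      atTop (nhds 0) := by
  have hv' : v ⬝ᵥ v = 1 := by simpa [dotProduct, sq] using hv
  choose l hl hE2 using hE2
  choose m hm hE3 using hE3
  set k := Real.sqrt 2
  have hperp : ∀ i (s : ℝ), Perp v (s • l i + (1 - s) • m i) (s • l i - (1 - s) • m i) (E4 i) :=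
    fun i s => ⟨by simp [add_dotProduct, hl, hm], by simp [sub_dotProduct, hl, hm], (hE4 i).2, by
      rw [← mulVec_transpose, (hE4 i).1, neg_mulVec, (hE4 i).2, neg_zero]⟩
  have hQ' : ∀ i z, Q i z = blk v (lam i * (k * (sAC z * (1 - sAC z))))
      (sAC z • l i + (1 - sAC z) • m i) (sAC z • l i - (1 - sAC z) • m i) (E4 i) := fun i z => by
    rw [hQ, hE2, hE3, (sAC_hasDerivAt z).deriv]
    simp only [blk, vecMulVec_add, vecMulVec_smul, sub_vecMulVec, smul_vecMulVec]
    module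
  refine (tendsto_integral_primAC (k ^ 3 * lam 0 * lam 1 * lam 2)
    (k * (lam 0 * (l 1 ⬝ᵥ l 2) + lam 1 * (l 0 ⬝ᵥ l 2) + lam 2 * (l 0 ⬝ᵥ l 1)))
    (k * (lam 0 * (m 1 ⬝ᵥ m 2) + lam 1 * (m 0 ⬝ᵥ m 2) + lam 2 * (m 0 ⬝ᵥ m 1)))
    ((l 2 ⬝ᵥ E4 0 *ᵥ m 1 - m 2 ⬝ᵥ E4 0 *ᵥ l 1) + (l 0 ⬝ᵥ E4 1 *ᵥ m 2 - m 0 ⬝ᵥ E4 1 *ᵥ l 2)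
      + (l 0 ⬝ᵥ E4 2 *ᵥ m 1 - m 0 ⬝ᵥ E4 2 *ᵥ l 1))).congr fun R => ?_
  refine intervalIntegral.integral_congr fun z _ => ?_
  simp only [hQ', hP₀, one_sub_eq_blk]
  rw [finner_Tf_blk hv' (hperp 0 _) (hperp 1 _) (hperp 2 _) (hE4 0).1 (hE4 1).1 (hE4 2).1]
  generalize sAC z = s
  have hW : ∀ i (x y : Fin n → ℝ), x ⬝ᵥ E4 i *ᵥ y = -(y ⬝ᵥ E4 i *ᵥ x) :=
    fun i => dot_mulVec_antisymm (hE4 i).1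
  simp only [mulVec_add, mulVec_sub, mulVec_smul, dotProduct_add, dotProduct_sub, add_dotProduct,
    sub_dotProduct, dotProduct_smul, smul_dotProduct, smul_eq_mul, smul_add, smul_sub]
  -- Each scalar is brought to one fixed order of its two vectors before `ring`.
  simp only [dotProduct_comm _ (l 0), dotProduct_comm _ (m 0), dotProduct_comm (l 2) (l 1),
    dotProduct_comm (m 2) (m 1), dotProduct_comm (l 2) (m 1), dotProduct_comm (m 2) (l 1),
    hW 1 (l 2), hW 1 (m 2), hW 2 (l 1), hW 2 (m 1), derivPrimAC]
  ring
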